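/- Let f ∈ C(𝕋), k ∈ ℕ with k ≥ 1, and h > 0. Then W₂(f, χ_h^k) ≤ (1/2)·ω₂(f, kh/2). -/

import Mathlib

/-!
The kernel `χ_h^k` is an even probability density vanishing outside `[-kh/2, kh/2]`: this holds for
`χ_h`, and convolving two such densities adds the half-widths (`IsKernel.conv`). For any even
probability density `g`, substituting `v ↦ t ± v` and averaging gives
`f t - (f * g) t = -(1/2) ∫ (f (t + v) - 2 f t + f (t - v)) g v dv`
(`IsKernel.sub_conv_eq`). On the support of `g` the second difference is at most `ω₂(f, kh/2)`, and
`g` has total mass one, which gives the bound.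
-/

open MeasureTheory Real

/-- Uniform (sup) norm of a real function. -/
noncomputable def unorm (f : ℝ → ℝ) : ℝ := ⨆ u : ℝ, |f u|

/-- Convolution of two real functions. -/
noncomputable def conv (f g : ℝ → ℝ) : ℝ → ℝ := fun t => ∫ u : ℝ, f u * g (t - u)

/-- Normalized characteristic function of `(-h/2, h/2)`. -/
noncomputable def chi (h : ℝ) : ℝ → ℝ := fun t => if -h/2 < t ∧ t < h/2 then 1/h else 0

/-- Convolution powers `χ_h^k` (defined for `k ≥ 1`; junk value `0` at `k = 0`). -/
noncomputable def chiPow (h : ℝ) : ℕ → (ℝ → ℝ)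
  | 0 => fun _ => 0
  | 1 => chi h
  | (k+2) => conv (chiPow h (k+1)) (chi h)

/-- Special modulus of continuity `W₂(f, χ_h^k) = ‖f - f*χ_h^k‖`. -/
noncomputable def W2 (f : ℝ → ℝ) (h : ℝ) (k : ℕ) : ℝ :=
  unorm (fun t => f t - conv f (chiPow h k) t)

/-- `W₂*(f, χ_h^k) = sup_{0 < u ≤ h} W₂(f, χ_u^k)`. -/
noncomputable def W2star (f : ℝ → ℝ) (h : ℝ) (k : ℕ) : ℝ :=
  ⨆ u : Set.Ioc (0:ℝ) h, W2 f u.1 k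

/-- Second Peetre K-functional: infimum over twice continuously differentiable
1-periodic functions `g` of `‖f - g‖ + h² ‖D²g‖`. -/
noncomputable def K2 (f : ℝ → ℝ) (h : ℝ) : ℝ :=
  ⨅ g : {g : ℝ → ℝ // ContDiff ℝ 2 g ∧ Function.Periodic g 1},
    unorm (fun t => f t - g.1 t) + h^2 * unorm (iteratedDeriv 2 g.1)

/-- Generalized K-functional `K̃₂(f, h₁, h₂)`. -/
noncomputable def Ktilde2 (f : ℝ → ℝ) (h1 h2 : ℝ) : ℝ :=
  ⨅ p : {p : (ℝ → ℝ) × (ℝ → ℝ) //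
      (ContDiff ℝ 1 p.1 ∧ Function.Periodic p.1 1) ∧
      (ContDiff ℝ 2 p.2 ∧ Function.Periodic p.2 1)},
    unorm (fun t => f t - p.1.1 t) + h1 * unorm (deriv (fun t => p.1.1 t - p.1.2 t))
      + h2^2 * unorm (iteratedDeriv 2 p.1.2)

/-- Classical second modulus of smoothness. -/
noncomputable def omega2 (f : ℝ → ℝ) (h : ℝ) : ℝ :=
  ⨆ u : Set.Ioc (0:ℝ) h, ⨆ t : ℝ, |f (t + u.1) - 2 * f t + f (t - u.1)|

/-- `τ` is a real 1-periodic trigonometric polynomial of degree at most `n - 1`. -/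
def IsTrigPolyDegLT (n : ℕ) (τ : ℝ → ℝ) : Prop :=
  ∃ a b : ℕ → ℝ, ∀ t : ℝ, τ t =
    ∑ j ∈ Finset.range n, (a j * Real.cos (2 * Real.pi * j * t) + b j * Real.sin (2 * Real.pi * j * t))

/-- Best approximation `E_{n-1}(f)` by trigonometric polynomials of degree at most `n-1`. -/
noncomputable def bestApprox (n : ℕ) (f : ℝ → ℝ) : ℝ :=
  ⨅ τ : {τ : ℝ → ℝ // IsTrigPolyDegLT n τ}, unorm (fun t => f t - τ.1 t)

/-- `g` is an even probability density on `ℝ` that vanishes outside `[-r, r]`. -/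
structure IsKernel (g : ℝ → ℝ) (r : ℝ) : Prop where
  integrable : Integrable g
  nonneg : ∀ t, 0 ≤ g t
  even : ∀ t, g (-t) = g t
  integral_eq : ∫ t, g t = 1
  support : ∀ t, r < |t| → g t = 0

lemma isKernel_chi {h : ℝ} (hh : 0 < h) : IsKernel (chi h) (h / 2) := by
  have e : chi h = (Set.Ioo (-h/2) (h/2)).indicator (fun _ => 1/h) := by
    ext t
    simp [chi, Set.indicator_apply]
  constructor
  · rw [e, integrable_indicator_iff measurableSet_Ioo]
    exact integrableOn_const (by simp)
  · intro t
    unfold chi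
    split_ifs <;> positivity
  · intro t
    unfold chi
    refine if_congr ?_ rfl rfl
    constructor <;> rintro ⟨h1, h2⟩ <;> constructor <;> linarith
  · rw [e, integral_indicator measurableSet_Ioo, setIntegral_const]
    have : h / 2 - -h / 2 = h := by ring
    rw [Real.volume_real_Ioo_of_le (by linarith), this, smul_eq_mul]
    field_simp
  · intro t ht
    unfold chi
    rw [if_neg]
    rintro ⟨h1, h2⟩
    have : |t| ≤ h / 2 := abs_le.2 ⟨by linarith, by linarith⟩
    linarith

open scoped Convolution in
lemma conv_eq_convolution (f g : ℝ → ℝ) :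
    conv f g = f ⋆[ContinuousLinearMap.mul ℝ ℝ, volume] g := rfl

lemma IsKernel.conv {g g' : ℝ → ℝ} {r r' : ℝ} (hg : IsKernel g r) (hg' : IsKernel g' r') :
    IsKernel (conv g g') (r + r') := by
  constructor
  · rw [conv_eq_convolution]
    exact hg.integrable.integrable_convolution _ hg'.integrable
  · exact fun t => integral_nonneg fun u => mul_nonneg (hg.nonneg _) (hg'.nonneg _)
  · intro t
    change ∫ u, g u * g' (-t - u) = ∫ u, g u * g' (t - u)
    rw [← integral_neg_eq_self]
    congr 1 with u
    rw [hg.even, ← hg'.even (t - u)]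
    congr 2
    ring
  · rw [conv_eq_convolution, integral_convolution _ hg.integrable hg'.integrable]
    simp [hg.integral_eq, hg'.integral_eq]
  · intro t ht
    refine integral_eq_zero_of_ae (Filter.Eventually.of_forall fun u => ?_)
    by_cases hu : r < |u|
    · simp [hg.support u hu]
    · have : |t| ≤ |u| + |t - u| := by simpa using abs_add_le u (t - u)
      simp [hg'.support (t - u) (by linarith)]

lemma isKernel_chiPow {h : ℝ} (hh : 0 < h) (n : ℕ) :
    IsKernel (chiPow h (n + 1)) ((n + 1 : ℕ) * h / 2) := by
  induction n with
  | zero => simpa [chiPow] using isKernel_chi hh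
  | succ n ih =>
    have := ih.conv (isKernel_chi hh)
    have e : ((n + 1 + 1 : ℕ) : ℝ) * h / 2 = (n + 1 : ℕ) * h / 2 + h / 2 := by
      push_cast
      ring
    rw [e]
    exact this

/-- For an even probability density, `f - f * g` is minus half the average of the second
differences of `f` against `g`. -/
lemma IsKernel.sub_conv_eq {g : ℝ → ℝ} {r : ℝ} (hg : IsKernel g r) {f : ℝ → ℝ}
    (hf : Continuous f) {M : ℝ} (hM : ∀ t, |f t| ≤ M) (t : ℝ) :
    f t - _root_.conv f g t = -(1/2) * ∫ v, (f (t + v) - 2 * f t + f (t - v)) * g v := by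
  have int (φ : ℝ → ℝ) (hφ : Continuous φ) : Integrable fun v => f (φ v) * g v :=
    hg.integrable.bdd_mul (hf.comp hφ).aestronglyMeasurable
      (Filter.Eventually.of_forall fun v => hM (φ v))
  have e1 : _root_.conv f g t = ∫ v, f (t - v) * g v := by
    change ∫ u, f u * g (t - u) = _
    rw [← integral_sub_left_eq_self _ volume t]
    simp
  have e2 : ∫ v, f (t + v) * g v = ∫ v, f (t - v) * g v := by
    rw [← integral_neg_eq_self]
    simp only [hg.even, sub_eq_add_neg]
  have i1 := int (fun v => t + v) (by fun_prop)
  have i2 := int (fun v => t - v) (by fun_prop)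
  have i3 := hg.integrable.const_mul (2 * f t)
  have e3 : ∫ v, (f (t + v) - 2 * f t + f (t - v)) * g v
      = (∫ v, f (t + v) * g v) - 2 * f t + ∫ v, f (t - v) * g v := by
    simp only [add_mul, sub_mul]
    have i13 : Integrable fun v => f (t + v) * g v - 2 * f t * g v := i1.sub i3
    rw [integral_add i13 i2, integral_sub i1 i3, integral_const_mul, hg.integral_eq,
      mul_one]
  rw [e3, e2, e1]
  ring

lemma abs_second_diff_le {f : ℝ → ℝ} {M : ℝ} (hM : ∀ t, |f t| ≤ M) (t v : ℝ) :
    |f (t + v) - 2 * f t + f (t - v)| ≤ 4 * M := by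
  have h1 := abs_le.1 (hM (t + v))
  have h2 := abs_le.1 (hM t)
  have h3 := abs_le.1 (hM (t - v))
  exact abs_le.2 ⟨by linarith, by linarith⟩

lemma omega2_nonneg (f : ℝ → ℝ) (r : ℝ) : 0 ≤ omega2 f r :=
  Real.iSup_nonneg fun _ => Real.iSup_nonneg fun _ => abs_nonneg _

lemma abs_second_diff_le_omega2 {f : ℝ → ℝ} {M : ℝ} (hM : ∀ t, |f t| ≤ M) {r : ℝ} (t v : ℝ)
    (hv : |v| ≤ r) : |f (t + v) - 2 * f t + f (t - v)| ≤ omega2 f r := by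
  have pos (w : ℝ) (h0 : 0 < w) (hw : w ≤ r) :
      |f (t + w) - 2 * f t + f (t - w)| ≤ omega2 f r := by
    -- Both suprema range over bounded sets, so neither takes its junk value.
    have b2 : BddAbove (Set.range fun u : Set.Ioc (0:ℝ) r =>
        ⨆ t : ℝ, |f (t + u.1) - 2 * f t + f (t - u.1)|) := by
      refine ⟨4 * M, ?_⟩
      rintro _ ⟨u, rfl⟩
      exact ciSup_le fun t => abs_second_diff_le hM t u.1
    have b1 : BddAbove (Set.range fun t : ℝ => |f (t + w) - 2 * f t + f (t - w)|) := by
      refine ⟨4 * M, ?_⟩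
      rintro _ ⟨s, rfl⟩
      exact abs_second_diff_le hM s w
    exact (le_ciSup b1 t).trans (le_ciSup b2 ⟨w, h0, hw⟩)
  rcases lt_trichotomy v 0 with h | h | h
  · have := pos (-v) (by linarith) (by rwa [← abs_of_neg h])
    rw [sub_neg_eq_add, ← sub_eq_add_neg] at this
    convert this using 2
    ring
  · subst h
    have e : f (t + 0) - 2 * f t + f (t - 0) = 0 := by
      rw [add_zero, sub_zero]
      ring
    rw [e, abs_zero]
    exact omega2_nonneg f r
  · exact pos v h ((le_abs_self v).trans hv)

/-- Lemma 1, inequality (2.2): `W₂(f, χ_h^k) ≤ (1/2)·ω₂(f, kh/2)`. -/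
theorem stmt10 (f : ℝ → ℝ) (hf : Continuous f) (hper : Function.Periodic f 1)
    (k : ℕ) (hk : 1 ≤ k) (h : ℝ) (hh : 0 < h) :
    W2 f h k ≤ (1/2) * omega2 f (k * h / 2) := by
  obtain ⟨M, hM⟩ : ∃ M, ∀ t, |f t| ≤ M := by
    obtain ⟨M, hM⟩ := (hper.isBounded_of_continuous one_ne_zero hf).exists_norm_le
    exact ⟨M, fun t => hM _ ⟨t, rfl⟩⟩
  obtain ⟨n, rfl⟩ := Nat.exists_eq_add_of_le' hk
  have hg := isKernel_chiPow hh n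
  refine ciSup_le fun t => ?_
  beta_reduce
  rw [hg.sub_conv_eq hf hM t, abs_mul, abs_neg, abs_of_pos (by norm_num : (0:ℝ) < 1 / 2)]
  gcongr
  set r : ℝ := (n + 1 : ℕ) * h / 2
  calc |∫ v, (f (t + v) - 2 * f t + f (t - v)) * chiPow h (n + 1) v|
      ≤ ∫ v, omega2 f r * chiPow h (n + 1) v := by
        rw [← Real.norm_eq_abs]
        refine norm_integral_le_of_norm_le (hg.integrable.const_mul _)
          (Filter.Eventually.of_forall fun v => ?_)
        rw [Real.norm_eq_abs, abs_mul, abs_of_nonneg (hg.nonneg v)]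
        rcases lt_or_ge r |v| with hv | hv
        · simp [hg.support v hv]
        · exact mul_le_mul_of_nonneg_right (abs_second_diff_le_omega2 hM t v hv) (hg.nonneg v)
    _ = omega2 f r := by rw [integral_const_mul, hg.integral_eq, mul_one]
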